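/- arXiv:2406.07183 — 3 statements merged into one kernel-verified Lean document; each statement's English description precedes it below -/
import Mathlib

section
/- Let G₁ and G₂ be r-regular graphs on the same number n of vertices whose adjacency matrices have the same characteristic polynomial (A-cospectral regular graphs), and let H be an arbitrary finite simple graph. Then for every α ∈ [0,1], the graphs G₁ ⊞ H and G₂ ⊞ H are A_α-cospectral, i.e., A_α(G₁ ⊞ H) and A_α(G₂ ⊞ H) have the same characteristic polynomial. -/
/-!
Regularity makes all degrees in `G ⊞ H` independent of the vertex of `G`: an original vertex has
degree `2r + |W|`, an added vertex has degree `r`, and a vertex `w` of a copy of `H` has degree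
`deg w + 1`. Hence `A_α(G ⊞ H)` is a block matrix, `coronaBlocks`, whose blocks are linear
combinations of `1` and `A(G)`, tensored with matrices depending only on `r`, `α` and `H`
(`AMat_corona`).

Real symmetric matrices with the same characteristic polynomial are similar, so there is an
invertible `P` with `A(G₁) P = P A(G₂)` (`exists_intertwiner`). Then `diag(P, P, P ⊗ 1)` is
invertible and intertwines the two block matrices (`coronaBlocks_mul_transfer`), so they have the
same characteristic polynomial. No resolvent is inverted, so no value of `x` is exceptional.
-/

open Matrix BigOperators

attribute [local instance] Classical.propDecidable

noncomputable section

namespace AalphaSpectra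

/-- The adjacency matrix (over `ℝ`) of a simple graph. -/
def adjMat {V : Type*} [Fintype V] (G : SimpleGraph V) : Matrix V V ℝ :=
  Matrix.of fun i j => if G.Adj i j then (1 : ℝ) else 0

/-- The diagonal degree matrix (over `ℝ`) of a simple graph. -/
def degMat {V : Type*} [Fintype V] (G : SimpleGraph V) : Matrix V V ℝ :=
  Matrix.diagonal fun i => ((G.neighborSet i).ncard : ℝ)

/-- The `A_α`-matrix `A_α(G) = α·D(G) + (1 - α)·A(G)` of a simple graph. -/
def AMat {V : Type*} [Fintype V] (G : SimpleGraph V) (a : ℝ) : Matrix V V ℝ :=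
  a • degMat G + (1 - a) • adjMat G

/-- The characteristic polynomial `φ(M, x) = det(x·I − M)` of a square matrix,
evaluated at `x`. -/
def charPolyAt {n : Type*} [Fintype n] (M : Matrix n n ℝ) (x : ℝ) : ℝ :=
  letI := Classical.decEq n
  (x • (1 : Matrix n n ℝ) - M).det

/-- The `M`-coronal `Γ_M(x) = 1ᵀ (x·I − M)⁻¹ 1`, the sum of all entries of
`(x·I − M)⁻¹`. -/
def coronal {n : Type*} [Fintype n] (M : Matrix n n ℝ) (x : ℝ) : ℝ :=
  letI := Classical.decEq n
  ∑ i, ∑ j, (x • (1 : Matrix n n ℝ) - M)⁻¹ i j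

/-- `G` is `r`-regular: every vertex has exactly `r` neighbours. -/
def IsRegularOfDeg {V : Type*} [Fintype V] (G : SimpleGraph V) (r : ℕ) : Prop :=
  ∀ v : V, (G.neighborSet v).ncard = r

/-- The splitting corona `G₁ ⊞ G₂`: take the splitting graph `Spl(G₁)`
(original vertices `Sum.inl (Sum.inl v)`, added vertices `Sum.inl (Sum.inr u)`,
where `u` is joined to all neighbours of `u` in `G₁`) together with one copy of
`G₂` for each vertex of `G₁`, and join every vertex of the `i`-th copy of `G₂`
to the original vertex `vᵢ ∈ V(G₁)`. -/
def splittingCorona {V₁ V₂ : Type*} (G₁ : SimpleGraph V₁) (G₂ : SimpleGraph V₂) :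
    SimpleGraph ((V₁ ⊕ V₁) ⊕ V₁ × V₂) :=
  SimpleGraph.fromRel fun a b =>
    match a, b with
    | Sum.inl (Sum.inl v), Sum.inl (Sum.inl w) => G₁.Adj v w
    | Sum.inl (Sum.inl v), Sum.inl (Sum.inr u) => G₁.Adj v u
    | Sum.inl (Sum.inl v), Sum.inr p => v = p.1
    | Sum.inr p, Sum.inr q => p.1 = q.1 ∧ G₂.Adj p.2 q.2
    | _, _ => False

/-- The block matrix over `(V ⊕ V) ⊕ V × W` obtained from `A` by the recipe which, for suitable
`c₁`, `c₂` and `N`, turns the adjacency matrix of a regular graph on `V` into the `A_α`-matrix of its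
splitting corona (with `b = 1 - α`). -/
def coronaBlocks {V W : Type*} (b c₁ c₂ : ℝ) (N : Matrix W W ℝ) (A : Matrix V V ℝ) :
    Matrix ((V ⊕ V) ⊕ V × W) ((V ⊕ V) ⊕ V × W) ℝ :=
  Matrix.fromBlocks
    (Matrix.fromBlocks (c₁ • (1 : Matrix V V ℝ) + b • A) (b • A) (b • A) (c₂ • (1 : Matrix V V ℝ)))
    (Matrix.fromRows (Matrix.of fun i p => if i = p.1 then b else 0) 0)
    (Matrix.fromCols (Matrix.of fun p i => if p.1 = i then b else 0) 0)
    (Matrix.of fun p q => if p.1 = q.1 then N p.2 q.2 else 0)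

/-- The block diagonal matrix `diag(P, P, P ⊗ 1)`. -/
def coronaTransfer {V₁ V₂ : Type*} (W : Type*) (P : Matrix V₁ V₂ ℝ) :
    Matrix ((V₁ ⊕ V₁) ⊕ V₁ × W) ((V₂ ⊕ V₂) ⊕ V₂ × W) ℝ :=
  Matrix.fromBlocks (Matrix.fromBlocks P 0 0 P) 0 0
    (Matrix.of fun p q => if p.2 = q.2 then P p.1 q.1 else 0)

lemma coronaTransfer_mul_eq_one {V₁ V₂ W : Type*} [Fintype V₁] [Fintype V₂] [Fintype W]
    {P : Matrix V₁ V₂ ℝ} {P' : Matrix V₂ V₁ ℝ} (h : P * P' = 1) :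
    coronaTransfer W P * coronaTransfer W P' = 1 := by
  have hk : (Matrix.of fun (p : V₁ × W) (q : V₂ × W) => if p.2 = q.2 then P p.1 q.1 else 0) *
      (Matrix.of fun (p : V₂ × W) (q : V₁ × W) => if p.2 = q.2 then P' p.1 q.1 else 0) = 1 := by
    ext ⟨i, w⟩ ⟨j, z⟩
    have hij := congrFun (congrFun h i) j
    rw [Matrix.mul_apply] at hij
    by_cases hw : w = z
    · subst hw
      simp [Matrix.mul_apply, Fintype.sum_prod_type, hij, Matrix.one_apply]
    · simp [Matrix.mul_apply, Fintype.sum_prod_type, hw]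
  simp [coronaTransfer, Matrix.fromBlocks_multiply, h, hk]

/-- An intertwiner of `A` and `A'` induces one of the block matrices built from them: every block is
a polynomial in the given matrix, tensored with something that does not involve it. -/
lemma coronaBlocks_mul_transfer {V₁ V₂ W : Type*} [Fintype V₁] [Fintype V₂] [Fintype W]
    (b c₁ c₂ : ℝ) (N : Matrix W W ℝ) {A : Matrix V₁ V₁ ℝ} {A' : Matrix V₂ V₂ ℝ}
    {P : Matrix V₁ V₂ ℝ} (h : A * P = P * A') :
    coronaBlocks b c₁ c₂ N A * coronaTransfer W P =
      coronaTransfer W P * coronaBlocks b c₁ c₂ N A' := by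
  have hh : ∀ i j, ∑ k, A i k * P k j = ∑ k, P i k * A' k j := fun i j => by
    simpa [Matrix.mul_apply] using congrFun (congrFun h i) j
  ext ((i | i) | ⟨i, w⟩) ((j | j) | ⟨j, z⟩) <;>
    simp [coronaBlocks, coronaTransfer, Matrix.mul_apply, Fintype.sum_sum_type,
      Fintype.sum_prod_type, Matrix.one_apply, mul_add, Finset.sum_add_distrib,
      mul_left_comm _ b, ← Finset.mul_sum, hh, mul_comm]

lemma charPolyAt_eq_eval {n : Type*} [Fintype n] [DecidableEq n] (M : Matrix n n ℝ) (x : ℝ) :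
    charPolyAt M x = M.charpoly.eval x := by
  rw [Matrix.eval_charpoly, Matrix.scalar_apply, ← Matrix.smul_one_eq_diagonal, charPolyAt]
  congr!

/-- Similar matrices have the same characteristic polynomial, for matrices indexed by two types
which may lie in different universes; `Q` is made square by transporting along a bijection. -/
lemma charPolyAt_eq_of_mul_eq {m n : Type*} [Fintype m] [Fintype n] [DecidableEq m]
    [DecidableEq n] {M : Matrix m m ℝ} {N : Matrix n n ℝ} {Q : Matrix m n ℝ} {Q' : Matrix n m ℝ}
    (hcard : Fintype.card m = Fintype.card n)
    (h : Q * Q' = 1) (hMN : M * Q = Q * N) (x : ℝ) :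
    charPolyAt M x = charPolyAt N x := by
  obtain ⟨e⟩ := Fintype.card_eq.mp hcard
  have hQ : Q.submatrix id e * Q'.submatrix e id = 1 := by
    rw [Matrix.submatrix_mul_equiv, h, Matrix.submatrix_id_id]
  have hM : M = Q.submatrix id e * Matrix.reindex e.symm e.symm N * Q'.submatrix e id := by
    simp only [Matrix.reindex_apply, Equiv.symm_symm, Matrix.submatrix_mul_equiv,
      Matrix.submatrix_id_id]
    rw [← hMN, Matrix.mul_assoc, h, Matrix.mul_one]
  rw [charPolyAt_eq_eval, charPolyAt_eq_eval, hM, Matrix.mul_assoc, Matrix.charpoly_mul_comm,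
    Matrix.mul_assoc, mul_eq_one_comm.mp hQ, Matrix.mul_one, Matrix.charpoly_reindex]

/-- Real symmetric matrices with the same characteristic polynomial are similar: both are
orthogonally diagonalizable, with the same eigenvalues. The index types may differ, so the
similarity is given by a rectangular matrix and its inverse. -/
lemma exists_intertwiner {V₁ V₂ : Type*} [Fintype V₁] [Fintype V₂]
    {A : Matrix V₁ V₁ ℝ} {A' : Matrix V₂ V₂ ℝ} (hA : A.IsHermitian) (hA' : A'.IsHermitian)
    (hcard : Fintype.card V₁ = Fintype.card V₂)
    (hch : ∀ x, charPolyAt A x = charPolyAt A' x) :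
    ∃ (P : Matrix V₁ V₂ ℝ) (P' : Matrix V₂ V₁ ℝ), P * P' = 1 ∧ A * P = P * A' := by
  obtain ⟨e⟩ := Fintype.card_eq.mp hcard
  set B : Matrix V₁ V₁ ℝ := Matrix.reindex e.symm e.symm A' with hBdef
  have hB : B.IsHermitian := hA'.submatrix _
  have hAB : A.charpoly = B.charpoly := by
    rw [hBdef, Matrix.charpoly_reindex]
    refine Polynomial.funext fun x => ?_
    rw [← charPolyAt_eq_eval, ← charPolyAt_eq_eval, hch]
  have hev := (Matrix.IsHermitian.eigenvalues_eq_eigenvalues_iff hA hB).mpr hAB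
  obtain ⟨U, U', D, h1, h2, h3⟩ : ∃ U U' D : Matrix V₁ V₁ ℝ, U * U' = 1 ∧ A = U * D * U' ∧
      D = Matrix.diagonal hA.eigenvalues := by
    have := hA.spectral_theorem
    exact ⟨hA.eigenvectorUnitary, star (hA.eigenvectorUnitary : Matrix V₁ V₁ ℝ), _,
      Unitary.coe_mul_star_self _, by simpa [Unitary.conjStarAlgAut_apply] using this, rfl⟩
  obtain ⟨T, T', D', k1, k2, k3⟩ : ∃ U U' D : Matrix V₁ V₁ ℝ, U * U' = 1 ∧ B = U * D * U' ∧
      D = Matrix.diagonal hB.eigenvalues := by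
    have := hB.spectral_theorem
    exact ⟨hB.eigenvectorUnitary, star (hB.eigenvectorUnitary : Matrix V₁ V₁ ℝ), _,
      Unitary.coe_mul_star_self _, by simpa [Unitary.conjStarAlgAut_apply] using this, rfl⟩
  obtain rfl : D' = D := by rw [h3, k3, hev]
  have h1' := mul_eq_one_comm.mp h1
  have k1' := mul_eq_one_comm.mp k1
  have hUT : (U * T') * (T * U') = 1 := by
    rw [Matrix.mul_assoc, ← Matrix.mul_assoc T', k1', Matrix.one_mul, h1]
  have hA'B : A' = B.submatrix e.symm e.symm := by ext i j; simp [hBdef]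
  -- `U` and `T` diagonalize `A` and `B` to the same `D'`, so `U * T⁻¹` conjugates `B` to `A`.
  have hcomm : A * (U * T') = (U * T') * B := by
    rw [h2, k2]
    calc U * D' * U' * (U * T') = U * D' * (U' * U) * T' := by simp only [Matrix.mul_assoc]
      _ = U * (T' * T) * D' * T' := by rw [h1', k1']; simp
      _ = _ := by simp only [Matrix.mul_assoc]
  refine ⟨(U * T').submatrix id e.symm, (T * U').submatrix e.symm id, ?_, ?_⟩
  · rw [Matrix.submatrix_mul_equiv, hUT, Matrix.submatrix_id_id]
  · rw [hA'B, Matrix.submatrix_mul_equiv, ← hcomm]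
    rfl

lemma adjMat_isHermitian {V : Type*} [Fintype V] (G : SimpleGraph V) :
    (adjMat G).IsHermitian := by
  ext i j
  simp [adjMat, G.adj_comm]

lemma ncard_neighborSet_eq_sum {V : Type*} [Fintype V] (G : SimpleGraph V) (v : V) :
    ((G.neighborSet v).ncard : ℝ) = ∑ w, if G.Adj v w then (1 : ℝ) else 0 := by
  rw [Finset.sum_boole, Set.ncard_eq_toFinset_card']
  congr 2
  ext w
  simp

section Adjacency

/-! In the names below, `v` stands for an original vertex of `G`, `u` for an added vertex of the
splitting graph, and `p` for a vertex of one of the copies of `H`. -/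

variable {V W : Type*} (G : SimpleGraph V) (H : SimpleGraph W)

lemma corona_adj_vv (v w : V) : (splittingCorona G H).Adj (.inl (.inl v)) (.inl (.inl w)) ↔
    G.Adj v w := by
  simpa [splittingCorona, G.adj_comm w v] using fun h : G.Adj v w => h.ne

lemma corona_adj_vu (v w : V) : (splittingCorona G H).Adj (.inl (.inl v)) (.inl (.inr w)) ↔
    G.Adj v w := by
  simp [splittingCorona]

lemma corona_adj_uv (v w : V) : (splittingCorona G H).Adj (.inl (.inr v)) (.inl (.inl w)) ↔
    G.Adj v w := by
  simp [splittingCorona, G.adj_comm w v]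

lemma corona_adj_uu (v w : V) : ¬ (splittingCorona G H).Adj (.inl (.inr v)) (.inl (.inr w)) := by
  simp [splittingCorona]

lemma corona_adj_vp (v : V) (p : V × W) : (splittingCorona G H).Adj (.inl (.inl v)) (.inr p) ↔
    v = p.1 := by
  simp [splittingCorona]

lemma corona_adj_pv (v : V) (p : V × W) : (splittingCorona G H).Adj (.inr p) (.inl (.inl v)) ↔
    p.1 = v := by
  simp [splittingCorona, eq_comm]

lemma corona_adj_up (v : V) (p : V × W) :
    ¬ (splittingCorona G H).Adj (.inl (.inr v)) (.inr p) := by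
  simp [splittingCorona]

lemma corona_adj_pu (v : V) (p : V × W) :
    ¬ (splittingCorona G H).Adj (.inr p) (.inl (.inr v)) := by
  simp [splittingCorona]

lemma corona_adj_pp (p q : V × W) : (splittingCorona G H).Adj (.inr p) (.inr q) ↔
    p.1 = q.1 ∧ H.Adj p.2 q.2 := by
  have : p.1 = q.1 → H.Adj p.2 q.2 → p ≠ q := fun _ h e => h.ne (congrArg Prod.snd e)
  simp only [splittingCorona, SimpleGraph.fromRel_adj, H.adj_comm q.2 p.2, eq_comm (a := q.1)]
  simpa using this

end Adjacency

/-- The diagonal block `α • 1 + AMat H α` has the extra `α • 1` because each vertex of a copy of `H`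
gains one neighbour, the original vertex the copy is attached to. -/
lemma AMat_corona {V W : Type*} [Fintype V] [Fintype W] (G : SimpleGraph V) (H : SimpleGraph W)
    {r : ℕ} (hreg : IsRegularOfDeg G r) (α : ℝ) :
    AMat (splittingCorona G H) α =
      coronaBlocks (1 - α) (α * (2 * r + Fintype.card W)) (α * r)
        (α • 1 + AMat H α) (adjMat G) := by
  have hr : ∀ v, ∑ w, (if G.Adj v w then (1 : ℝ) else 0) = r := fun v => by
    rw [← ncard_neighborSet_eq_sum, hreg v]
  ext ((i | i) | ⟨i, w⟩) ((j | j) | ⟨j, z⟩)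
  all_goals simp only [AMat, degMat, adjMat, ncard_neighborSet_eq_sum, Matrix.add_apply,
      Matrix.smul_apply, Matrix.diagonal_apply, Matrix.of_apply, Fintype.sum_sum_type,
      Fintype.sum_prod_type, corona_adj_vv, corona_adj_vu, corona_adj_uv, corona_adj_uu,
      corona_adj_vp, corona_adj_pv, corona_adj_up, corona_adj_pu, corona_adj_pp, hr]
  all_goals simp [coronaBlocks, Matrix.one_apply, ite_and]
  · rw [two_mul]
  · by_cases hij : i = j <;> by_cases hw : w = z
    · subst hw; simp [hij]; ring
    · simp [hij, hw]
    · simp [hij]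
    · simp [hij]

theorem splittingCorona_cospectral_of_cospectral_regular
    {V₁ V₂ W : Type*} [Fintype V₁] [Fintype V₂] [Fintype W]
    (G₁ : SimpleGraph V₁) (G₂ : SimpleGraph V₂) (H : SimpleGraph W)
    (n r : ℕ)
    (hn₁ : Fintype.card V₁ = n) (hn₂ : Fintype.card V₂ = n)
    (hreg₁ : IsRegularOfDeg G₁ r) (hreg₂ : IsRegularOfDeg G₂ r)
    (hcosp : ∀ x : ℝ, charPolyAt (adjMat G₁) x = charPolyAt (adjMat G₂) x)
    (α : ℝ) (hα : α ∈ Set.Icc (0 : ℝ) 1) :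
    ∀ x : ℝ, charPolyAt (AMat (splittingCorona G₁ H) α) x =
      charPolyAt (AMat (splittingCorona G₂ H) α) x := by
  intro x
  obtain ⟨P, P', h, hc⟩ := exists_intertwiner (adjMat_isHermitian G₁) (adjMat_isHermitian G₂)
    (hn₁.trans hn₂.symm) hcosp
  rw [AMat_corona G₁ H hreg₁, AMat_corona G₂ H hreg₂]
  exact charPolyAt_eq_of_mul_eq (by simp [hn₁, hn₂]) (coronaTransfer_mul_eq_one h)
    (coronaBlocks_mul_transfer _ _ _ _ hc) x

end AalphaSpectra
end
end

section
/- Let G₁ and G₂ be r-regular graphs on the same number n of vertices whose adjacency matrices have the same characteristic polynomial (A-cospectral regular graphs), and let H be an arbitrary finite simple graph. Then for every α ∈ [0,1], the graphs G₁ ⊠ H and G₂ ⊠ H are A_α-cospectral, i.e., A_α(G₁ ⊠ H) and A_α(G₂ ⊠ H) have the same characteristic polynomial. -/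
/-!
The corona of an `r`-regular graph `G` with `H` has vertices of three kinds, and all its degrees
(`2r`, `r + |W|` and `deg_H w + 1`) are independent of the vertex of `G` involved. Grouping the
vertices by the vertex of `G` they belong to therefore exhibits `x·I - A_α(G ⊠ H)` as
`X ⊗ A(G) + Y ⊗ I`, where `X` and `Y`, indexed by `(Unit ⊕ Unit) ⊕ W`, depend only on
`r`, `H`, `α` and `x` (`corona_matrix_eq`).

As `A(G)` is real symmetric, an orthogonal change of basis diagonalizes it, and with it every
`X ⊗ A(G) + Y ⊗ I`: the determinant is `∏ det (μ X + Y)` over the eigenvalues `μ` of `A(G)` with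
multiplicity, that is, over the roots of the characteristic polynomial
(`det_kronecker_add_eq_prod_roots`). Hence it depends on `G` only through its spectrum.
-/

open Matrix BigOperators

attribute [local instance] Classical.propDecidable

noncomputable section

namespace AalphaSpectra

/-- The splitting add vertex corona `G₁ ⊠ G₂`: take the splitting graph `Spl(G₁)`
(original vertices `Sum.inl (Sum.inl v)`, added vertices `Sum.inl (Sum.inr u)`)
together with one copy of `G₂` for each vertex of `G₁`, and join every vertex of
the `i`-th copy of `G₂` to the added vertex `uᵢ ∈ U(G₁)`. -/
def splitAddVertexCorona {V₁ V₂ : Type*} (G₁ : SimpleGraph V₁) (G₂ : SimpleGraph V₂) :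
    SimpleGraph ((V₁ ⊕ V₁) ⊕ V₁ × V₂) :=
  SimpleGraph.fromRel fun a b =>
    match a, b with
    | Sum.inl (Sum.inl v), Sum.inl (Sum.inl w) => G₁.Adj v w
    | Sum.inl (Sum.inl v), Sum.inl (Sum.inr u) => G₁.Adj v u
    | Sum.inl (Sum.inr u), Sum.inr p => u = p.1
    | Sum.inr p, Sum.inr q => p.1 = q.1 ∧ G₂.Adj p.2 q.2
    | _, _ => False

/-- Pencils `X ⊗ A + Y ⊗ I` with `A` symmetric have a determinant determined by the characteristic
polynomial of `A`. -/
lemma det_kronecker_add_eq_prod_roots {V K : Type*} [Fintype V] [DecidableEq V] [Fintype K]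
    [DecidableEq K] (A : Matrix V V ℝ) (hA : A.IsHermitian) (X Y : Matrix K K ℝ) :
    (kroneckerMap (· * ·) X A + kroneckerMap (· * ·) Y (1 : Matrix V V ℝ)).det =
      (A.charpoly.roots.map fun μ => (μ • X + Y).det).prod := by
  obtain ⟨U, U', hUU', hU'U, hAU⟩ : ∃ U U' : Matrix V V ℝ, U * U' = 1 ∧ U' * U = 1 ∧
      A = U * diagonal hA.eigenvalues * U' := by
    refine ⟨hA.eigenvectorUnitary, star (hA.eigenvectorUnitary : Matrix V V ℝ),
      Unitary.coe_mul_star_self _, Unitary.coe_star_mul_self _, ?_⟩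
    have h := hA.spectral_theorem
    rw [Unitary.conjStarAlgAut_apply] at h
    exact h
  have hfac : kroneckerMap (· * ·) X A + kroneckerMap (· * ·) Y (1 : Matrix V V ℝ) =
      kroneckerMap (· * ·) (1 : Matrix K K ℝ) U *
        (blockDiagonal fun i => hA.eigenvalues i • X + Y) *
          kroneckerMap (· * ·) (1 : Matrix K K ℝ) U' := by
    have hblock : (blockDiagonal fun i => hA.eigenvalues i • X + Y) =
        kroneckerMap (· * ·) X (diagonal hA.eigenvalues) +
          kroneckerMap (· * ·) Y (1 : Matrix V V ℝ) := by
      ext ⟨k, v⟩ ⟨k', v'⟩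
      by_cases h : v = v'
      · subst h
        simp [blockDiagonal_apply, mul_comm]
      · simp [blockDiagonal_apply, h]
    rw [hblock, mul_add, add_mul]
    simp only [← mul_kronecker_mul, Matrix.one_mul, Matrix.mul_one, hUU', ← hAU]
  have hdet : (kroneckerMap (· * ·) (1 : Matrix K K ℝ) U).det *
      (kroneckerMap (· * ·) (1 : Matrix K K ℝ) U').det = 1 := by
    rw [← det_mul, ← mul_kronecker_mul, hUU', Matrix.one_mul, one_kronecker_one, det_one]
  rw [hfac, det_mul, det_mul, mul_right_comm, hdet, one_mul, det_blockDiagonal,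
    hA.roots_charpoly_eq_eigenvalues, Multiset.map_map]
  rfl

/-- Groups the vertices of the corona by kind (original, added, or copy of `w`) and by the vertex
of the first graph they belong to. -/
def coronaEquiv (V W : Type*) : (V ⊕ V) ⊕ V × W ≃ ((Unit ⊕ Unit) ⊕ W) × V where
  toFun
    | Sum.inl (Sum.inl v) => (Sum.inl (Sum.inl ()), v)
    | Sum.inl (Sum.inr v) => (Sum.inl (Sum.inr ()), v)
    | Sum.inr (v, w) => (Sum.inr w, v)
  invFun
    | (Sum.inl (Sum.inl _), v) => Sum.inl (Sum.inl v)
    | (Sum.inl (Sum.inr _), v) => Sum.inl (Sum.inr v)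
    | (Sum.inr w, v) => Sum.inr (v, w)
  left_inv := by rintro ((v | v) | ⟨v, w⟩) <;> rfl
  right_inv := by rintro ⟨(_ | _) | w, v⟩ <;> rfl

/-- The coefficient of `A(G)` in `x·I - A_α(G ⊠ H)`: the edges joining two original vertices, or
an original and an added one. -/
def coronaX (W : Type*) (α : ℝ) : Matrix ((Unit ⊕ Unit) ⊕ W) ((Unit ⊕ Unit) ⊕ W) ℝ :=
  Matrix.of fun a b =>
    match a, b with
    | Sum.inl (Sum.inl _), Sum.inl _ => -(1 - α)
    | Sum.inl (Sum.inr _), Sum.inl (Sum.inl _) => -(1 - α)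
    | _, _ => 0

/-- The part of `x·I - A_α(G ⊠ H)` that stays within the vertices attached to one vertex of `G`:
the diagonal, the edges inside a copy of `H`, and those joining it to its added vertex. -/
def coronaY {W : Type*} [Fintype W] (H : SimpleGraph W) (r : ℕ) (α x : ℝ) :
    Matrix ((Unit ⊕ Unit) ⊕ W) ((Unit ⊕ Unit) ⊕ W) ℝ :=
  Matrix.of fun a b =>
    match a, b with
    | Sum.inl (Sum.inl _), Sum.inl (Sum.inl _) => x - α * (2 * r)
    | Sum.inl (Sum.inr _), Sum.inl (Sum.inr _) => x - α * (r + Fintype.card W)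
    | Sum.inl (Sum.inr _), Sum.inr _ => -(1 - α)
    | Sum.inr _, Sum.inl (Sum.inr _) => -(1 - α)
    | Sum.inr w, Sum.inr w' =>
        (if w = w' then x - α * ((H.neighborSet w).ncard + 1) else 0) -
          (1 - α) * (if H.Adj w w' then 1 else 0)
    | _, _ => 0

section Adjacency

variable {V W : Type*} (G : SimpleGraph V) (H : SimpleGraph W) (u v : V) (w w' : W)

lemma adj_orig_orig : (splitAddVertexCorona G H).Adj (Sum.inl (Sum.inl u)) (Sum.inl (Sum.inl v)) ↔
    G.Adj u v := by
  simp only [splitAddVertexCorona, SimpleGraph.fromRel_adj]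
  constructor
  · rintro ⟨_, h | h⟩
    exacts [h, h.symm]
  · intro h
    exact ⟨by simpa using h.ne, Or.inl h⟩

lemma adj_orig_add : (splitAddVertexCorona G H).Adj (Sum.inl (Sum.inl u)) (Sum.inl (Sum.inr v)) ↔
    G.Adj u v := by
  simp [splitAddVertexCorona, SimpleGraph.fromRel_adj]

lemma adj_add_orig : (splitAddVertexCorona G H).Adj (Sum.inl (Sum.inr u)) (Sum.inl (Sum.inl v)) ↔
    G.Adj u v := by
  simp [splitAddVertexCorona, SimpleGraph.fromRel_adj, G.adj_comm]

lemma adj_add_add : ¬ (splitAddVertexCorona G H).Adj (Sum.inl (Sum.inr u))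
    (Sum.inl (Sum.inr v)) := by
  simp [splitAddVertexCorona, SimpleGraph.fromRel_adj]

lemma adj_orig_copy : ¬ (splitAddVertexCorona G H).Adj (Sum.inl (Sum.inl u)) (Sum.inr (v, w)) := by
  simp [splitAddVertexCorona, SimpleGraph.fromRel_adj]

lemma adj_copy_orig : ¬ (splitAddVertexCorona G H).Adj (Sum.inr (v, w)) (Sum.inl (Sum.inl u)) := by
  simp [splitAddVertexCorona, SimpleGraph.fromRel_adj]

lemma adj_add_copy : (splitAddVertexCorona G H).Adj (Sum.inl (Sum.inr u)) (Sum.inr (v, w)) ↔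
    u = v := by
  simp [splitAddVertexCorona, SimpleGraph.fromRel_adj]

lemma adj_copy_add : (splitAddVertexCorona G H).Adj (Sum.inr (v, w)) (Sum.inl (Sum.inr u)) ↔
    v = u := by
  simp [splitAddVertexCorona, SimpleGraph.fromRel_adj, eq_comm]

lemma adj_copy_copy : (splitAddVertexCorona G H).Adj (Sum.inr (u, w)) (Sum.inr (v, w')) ↔
    u = v ∧ H.Adj w w' := by
  simp only [splitAddVertexCorona, SimpleGraph.fromRel_adj]
  constructor
  · rintro ⟨_, h | h⟩
    exacts [h, ⟨h.1.symm, h.2.symm⟩]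
  · intro h
    refine ⟨fun e => h.2.ne ?_, Or.inl h⟩
    simpa using congrArg (fun p => p.2) (Sum.inr.inj e)

end Adjacency

section Degrees

variable {V W : Type*} [Fintype V] [Fintype W] (G : SimpleGraph V) (H : SimpleGraph W)

lemma degree_orig (v : V) :
    (((splitAddVertexCorona G H).neighborSet (Sum.inl (Sum.inl v))).ncard : ℝ) =
      2 * (G.neighborSet v).ncard := by
  simp only [ncard_neighborSet_eq_sum, Fintype.sum_sum_type, Fintype.sum_prod_type, adj_orig_orig,
    adj_orig_add, adj_orig_copy, if_false, Finset.sum_const_zero]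
  ring

lemma degree_add (v : V) :
    (((splitAddVertexCorona G H).neighborSet (Sum.inl (Sum.inr v))).ncard : ℝ) =
      (G.neighborSet v).ncard + Fintype.card W := by
  simp only [ncard_neighborSet_eq_sum, Fintype.sum_sum_type, Fintype.sum_prod_type, adj_add_orig,
    adj_add_add, adj_add_copy, if_false, Finset.sum_const_zero]
  simp

lemma degree_copy (v : V) (w : W) :
    (((splitAddVertexCorona G H).neighborSet (Sum.inr (v, w))).ncard : ℝ) =
      (H.neighborSet w).ncard + 1 := by
  simp only [ncard_neighborSet_eq_sum, Fintype.sum_sum_type, Fintype.sum_prod_type, adj_copy_orig,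
    adj_copy_add, adj_copy_copy, if_false, Finset.sum_const_zero, ite_and]
  rw [Finset.sum_comm (s := Finset.univ (α := V))]
  simp [add_comm]

end Degrees

lemma corona_matrix_eq {V W : Type*} [Fintype V] [Fintype W] (G : SimpleGraph V)
    (H : SimpleGraph W) (r : ℕ) (hreg : IsRegularOfDeg G r) (α x : ℝ) :
    x • (1 : Matrix ((V ⊕ V) ⊕ V × W) ((V ⊕ V) ⊕ V × W) ℝ) - AMat (splitAddVertexCorona G H) α =
      (kroneckerMap (· * ·) (coronaX W α) (adjMat G) +
        kroneckerMap (· * ·) (coronaY H r α x) (1 : Matrix V V ℝ)).submatrix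
          (coronaEquiv V W) (coronaEquiv V W) := by
  ext ((u | u) | ⟨u, w⟩) ((v | v) | ⟨v, w'⟩)
  all_goals
    simp only [AMat, degMat, adjMat, coronaEquiv, coronaX, coronaY, Matrix.sub_apply,
      Matrix.add_apply, Matrix.smul_apply, Matrix.one_apply, diagonal_apply, Matrix.of_apply,
      submatrix_apply, kroneckerMap_apply, Equiv.coe_fn_mk, adj_orig_orig, adj_orig_add,
      adj_add_orig, adj_add_add, adj_orig_copy, adj_copy_orig, adj_add_copy, adj_copy_add,
      adj_copy_copy, degree_orig, degree_add, degree_copy, hreg u, smul_eq_mul, Sum.inl.injEq,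
      Sum.inr.injEq, Prod.mk.injEq, reduceCtorEq, if_false]
  all_goals by_cases huv : u = v
  all_goals simp only [huv, true_and, false_and, if_true, if_false]
  all_goals split_ifs <;> ring

/-- `charPolyAt` is built on `Classical.decEq`; this restates it for an arbitrary decidability
instance. -/
lemma charPolyAt_eq {n : Type*} [Fintype n] [inst : DecidableEq n] (M : Matrix n n ℝ) (x : ℝ) :
    charPolyAt M x = (x • (1 : Matrix n n ℝ) - M).det := by
  rw [Subsingleton.elim inst (Classical.decEq n)]
  rfl

lemma charPolyAt_corona {V W : Type*} [Fintype V] [Fintype W] (G : SimpleGraph V)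
    (H : SimpleGraph W) (r : ℕ) (hreg : IsRegularOfDeg G r) (α x : ℝ) :
    charPolyAt (AMat (splitAddVertexCorona G H) α) x =
      ((adjMat G).charpoly.roots.map fun μ => (μ • coronaX W α + coronaY H r α x).det).prod := by
  have hA : (adjMat G).IsHermitian := by
    ext u v
    simp [adjMat, G.adj_comm]
  rw [charPolyAt_eq, corona_matrix_eq G H r hreg, det_submatrix_equiv_self,
    det_kronecker_add_eq_prod_roots _ hA]

theorem splitAddVertexCorona_cospectral_of_cospectral_regular
    {V₁ V₂ W : Type*} [Fintype V₁] [Fintype V₂] [Fintype W]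
    (G₁ : SimpleGraph V₁) (G₂ : SimpleGraph V₂) (H : SimpleGraph W)
    (n r : ℕ)
    (hn₁ : Fintype.card V₁ = n) (hn₂ : Fintype.card V₂ = n)
    (hreg₁ : IsRegularOfDeg G₁ r) (hreg₂ : IsRegularOfDeg G₂ r)
    (hcosp : ∀ x : ℝ, charPolyAt (adjMat G₁) x = charPolyAt (adjMat G₂) x)
    (α : ℝ) (hα : α ∈ Set.Icc (0 : ℝ) 1) :
    ∀ x : ℝ, charPolyAt (AMat (splitAddVertexCorona G₁ H) α) x =
      charPolyAt (AMat (splitAddVertexCorona G₂ H) α) x := by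
  intro x
  have hchar : (adjMat G₁).charpoly = (adjMat G₂).charpoly := by
    refine Polynomial.funext fun y => ?_
    have h := hcosp y
    rw [charPolyAt_eq, charPolyAt_eq] at h
    simpa only [eval_charpoly, scalar_apply, ← smul_one_eq_diagonal] using h
  rw [charPolyAt_corona G₁ H r hreg₁, charPolyAt_corona G₂ H r hreg₂, hchar]

end AalphaSpectra
end
end

section
/- Let G₁ be an r₁-regular graph on n₁ vertices and G₂ an r₂-regular graph on n₂ vertices, and let α ∈ [0,1]. Then for every real λ: (λ − αr₁ − r₂)^{n₁} · φ(A_α(G₁ ⋇ G₂), λ) = ∏_{i=1}^{n₂}(λ − αr₁ − λ_i(A_α(G₂)))^{n₁} · ∏_{i=1}^{n₁}[ (λ − αr₁)·((λ − αr₁ − r₂)(λ − (2+n₂)r₁α − (1−α)λ_i(A(G₁))) − (1−α)²n₂λ_i(A(G₁))²) − (1−α)²(λ − αr₁ − r₂)λ_i(A(G₁))² ]. In particular, the A_α-spectrum of G₁ ⋇ G₂ consists of αr₁ + λ_i(A_α(G₂)) for i = 2,…,n₂ each with multiplicity n₁, together with, for each i = 1,…,n₁, the three roots of the displayed cubic factor.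 -/
/-!
Put `x = lam - α r₁` and `A = A(G₁)`. By regularity the original vertices, the added vertices and
the vertices in the copies of `G₂` have degrees `(2 + n₂) r₁`, `r₁` and `r₁ + r₂`, so
`lam I - A_α(G₁ ⋇ G₂)` has lower right block `D = diag(x I, I ⊗ (x I - A_α(G₂)))`
(`corona_block_form`). Because `x I - A_α(G₂)` has constant row sums `x - r₂`, the blocks below
the original vertices can be cleared by a column operation that needs no inverse, at the price of
a factor `(x (x - r₂)) ^ n₁` (`det_fromBlocks_mul_pow`). What remains in the upper left corner is
a quadratic polynomial in `A` (`corona_elimination`), whose determinant is the product of its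
values at the eigenvalues of `A` (`det_quadratic_eq_prod`). The surplus factor `x ^ n₁` is
cancelled for `x ≠ 0`, and the case `x = 0` follows by continuity in `lam`.
-/

open Matrix BigOperators

attribute [local instance] Classical.propDecidable

noncomputable section

namespace AalphaSpectra

/-- The splitting neighbourhood corona `G₁ ⋇ G₂`: take the splitting graph
`Spl(G₁)` (original vertices `Sum.inl (Sum.inl v)`, added vertices
`Sum.inl (Sum.inr u)`) together with one copy of `G₂` for each vertex of `G₁`,
and join every vertex of the `i`-th copy of `G₂` to all the vertices of `V(G₁)`
adjacent to `vᵢ` in `G₁`. -/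
def splitNbhdCorona {V₁ V₂ : Type*} (G₁ : SimpleGraph V₁) (G₂ : SimpleGraph V₂) :
    SimpleGraph ((V₁ ⊕ V₁) ⊕ V₁ × V₂) :=
  SimpleGraph.fromRel fun a b =>
    match a, b with
    | Sum.inl (Sum.inl v), Sum.inl (Sum.inl w) => G₁.Adj v w
    | Sum.inl (Sum.inl v), Sum.inl (Sum.inr u) => G₁.Adj v u
    | Sum.inl (Sum.inl v), Sum.inr p => G₁.Adj v p.1
    | Sum.inr p, Sum.inr q => p.1 = q.1 ∧ G₂.Adj p.2 q.2
    | _, _ => False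

/-! ### Determinants -/

/-- Let `A` be a real symmetric matrix with eigenvalues `f i`. A quadratic polynomial in `A` has
determinant the product of its values at the `f i`, by diagonalising `A`. -/
lemma det_quadratic_eq_prod {V : Type*} [Fintype V] [DecidableEq V] {n : ℕ}
    {A : Matrix V V ℝ} (hA : A.IsHermitian) (f : Fin n → ℝ)
    (hf : ∀ x : ℝ, (x • (1 : Matrix V V ℝ) - A).det = ∏ i, (x - f i)) (u v w : ℝ) :
    (u • (1 : Matrix V V ℝ) + v • A + w • (A * A)).det =
      ∏ i, (u + v * f i + w * f i ^ 2) := by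
  have hroots : Finset.univ.val.map hA.eigenvalues = Finset.univ.val.map f := by
    have h1 : A.charpoly = ∏ i, (Polynomial.X - Polynomial.C (f i)) := by
      refine Polynomial.funext fun x => ?_
      rw [Matrix.eval_charpoly, Polynomial.eval_prod, Matrix.scalar_apply, ← Matrix.smul_one_eq_diagonal, hf]
      simp
    have h2 := hA.roots_charpoly_eq_eigenvalues
    rw [h1, Polynomial.roots_prod _ _
      (Finset.prod_ne_zero_iff.mpr fun i _ => Polynomial.X_sub_C_ne_zero _)] at h2
    simpa [Function.comp_def] using h2.symm
  have hdet : (u • (1 : Matrix V V ℝ) + v • A + w • (A * A)).det =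
      ∏ i, (u + v * hA.eigenvalues i + w * hA.eigenvalues i ^ 2) := by
    set φ := Unitary.conjStarAlgAut ℝ _ hA.eigenvectorUnitary with hφ
    have hs : A = φ (diagonal hA.eigenvalues) := hA.spectral_theorem
    have h3 : u • (1 : Matrix V V ℝ) + v • A + w • (A * A) =
        φ (diagonal fun i => u + v * hA.eigenvalues i + w * hA.eigenvalues i ^ 2) := by
      conv_lhs => rw [hs]
      rw [← map_one φ, ← map_mul, ← map_smul, ← map_smul, ← map_smul, ← map_add, ← map_add]
      congr 1
      ext i j
      by_cases h : i = j
      · subst h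
        simp [sq]
      · simp [h]
    rw [h3, hφ, Unitary.conjStarAlgAut_apply, Matrix.det_mul_comm, ← mul_assoc]
    simp
  rw [hdet]
  have := congrArg (fun s => (s.map fun t => u + v * t + w * t ^ 2).prod) hroots
  simpa [Multiset.map_map, Function.comp_def, List.prod_ofFn] using this

/-- Block elimination without inverting the lower right block: right multiplication by
`[[s, 0], [Z, 1]]` clears the lower left block as soon as `s C + D Z = 0`. -/
lemma det_fromBlocks_mul_pow {m n : Type*} [Fintype m] [Fintype n] [DecidableEq m]
    [DecidableEq n] (A : Matrix m m ℝ) (B : Matrix m n ℝ) (C : Matrix n m ℝ) (D : Matrix n n ℝ)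
    (s : ℝ) (Z : Matrix n m ℝ) (h : s • C + D * Z = 0) :
    (fromBlocks A B C D).det * s ^ Fintype.card m = (s • A + B * Z).det * D.det := by
  have h1 : fromBlocks A B C D * fromBlocks (s • 1) 0 Z 1 =
      fromBlocks (s • A + B * Z) B 0 D := by
    simp [fromBlocks_multiply, h]
  have h2 := congrArg Matrix.det h1
  rw [det_mul, det_fromBlocks_zero₁₂, det_fromBlocks_zero₂₁] at h2
  simpa [det_smul] using h2

lemma charPolyAt_eq_det {V : Type*} [Fintype V] [DecidableEq V] (M : Matrix V V ℝ) (x : ℝ) :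
    charPolyAt M x = (x • (1 : Matrix V V ℝ) - M).det := by
  unfold charPolyAt
  convert rfl

/-! ### The splitting neighbourhood corona

In the names below `o`, `s` and `c` stand for an original vertex of `G₁`, an added vertex of the
splitting graph, and a vertex of a copy of `G₂`. -/

section Corona

variable {V₁ V₂ : Type*} (G₁ : SimpleGraph V₁) (G₂ : SimpleGraph V₂)

lemma corona_adj_oo (v w : V₁) :
    (splitNbhdCorona G₁ G₂).Adj (.inl (.inl v)) (.inl (.inl w)) ↔ G₁.Adj v w := by
  have := G₁.ne_of_adj (a := v) (b := w)
  simp [splitNbhdCorona, G₁.adj_comm w v]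
  tauto

lemma corona_adj_os (v w : V₁) :
    (splitNbhdCorona G₁ G₂).Adj (.inl (.inl v)) (.inl (.inr w)) ↔ G₁.Adj v w := by
  simp [splitNbhdCorona]

lemma corona_adj_so (v w : V₁) :
    (splitNbhdCorona G₁ G₂).Adj (.inl (.inr v)) (.inl (.inl w)) ↔ G₁.Adj v w := by
  simp [splitNbhdCorona, G₁.adj_comm w v]

lemma corona_adj_ss (v w : V₁) :
    ¬ (splitNbhdCorona G₁ G₂).Adj (.inl (.inr v)) (.inl (.inr w)) := by
  simp [splitNbhdCorona]

lemma corona_adj_oc (v : V₁) (p : V₁ × V₂) :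
    (splitNbhdCorona G₁ G₂).Adj (.inl (.inl v)) (.inr p) ↔ G₁.Adj v p.1 := by
  simp [splitNbhdCorona]

lemma corona_adj_co (v : V₁) (p : V₁ × V₂) :
    (splitNbhdCorona G₁ G₂).Adj (.inr p) (.inl (.inl v)) ↔ G₁.Adj p.1 v := by
  simp [splitNbhdCorona, G₁.adj_comm v p.1]

lemma corona_adj_sc (v : V₁) (p : V₁ × V₂) :
    ¬ (splitNbhdCorona G₁ G₂).Adj (.inl (.inr v)) (.inr p) := by
  simp [splitNbhdCorona]

lemma corona_adj_cs (v : V₁) (p : V₁ × V₂) :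
    ¬ (splitNbhdCorona G₁ G₂).Adj (.inr p) (.inl (.inr v)) := by
  simp [splitNbhdCorona]

lemma corona_adj_cc (p q : V₁ × V₂) :
    (splitNbhdCorona G₁ G₂).Adj (.inr p) (.inr q) ↔ p.1 = q.1 ∧ G₂.Adj p.2 q.2 := by
  have := G₂.ne_of_adj (a := p.2) (b := q.2)
  simp only [splitNbhdCorona, SimpleGraph.fromRel_adj, ne_eq, Sum.inr.injEq,
    G₂.adj_comm q.2 p.2, eq_comm (a := q.1), or_self, Prod.ext_iff]
  tauto

variable [Fintype V₁] [Fintype V₂] {G₁ G₂} {r₁ r₂ : ℕ}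

lemma sum_adj_of_regular {V : Type*} [Fintype V] {G : SimpleGraph V} {r : ℕ}
    (h : IsRegularOfDeg G r) (v : V) : (∑ w, if G.Adj v w then (1 : ℝ) else 0) = r := by
  rw [← ncard_neighborSet_eq_sum, h v]

lemma corona_degree_o (h₁ : IsRegularOfDeg G₁ r₁) (v : V₁) :
    (((splitNbhdCorona G₁ G₂).neighborSet (.inl (.inl v))).ncard : ℝ) =
      (2 + Fintype.card V₂) * r₁ := by
  rw [ncard_neighborSet_eq_sum]
  simp only [Fintype.sum_sum_type, corona_adj_oo, corona_adj_os, corona_adj_oc,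
    Fintype.sum_prod_type, sum_adj_of_regular h₁]
  rw [Finset.sum_comm]
  simp only [sum_adj_of_regular h₁, Finset.sum_const, Finset.card_univ, nsmul_eq_mul]
  ring

lemma corona_degree_s (h₁ : IsRegularOfDeg G₁ r₁) (v : V₁) :
    (((splitNbhdCorona G₁ G₂).neighborSet (.inl (.inr v))).ncard : ℝ) = r₁ := by
  rw [ncard_neighborSet_eq_sum]
  simp only [Fintype.sum_sum_type, corona_adj_so, corona_adj_ss, corona_adj_sc,
    sum_adj_of_regular h₁]
  simp

lemma corona_degree_c (h₁ : IsRegularOfDeg G₁ r₁) (h₂ : IsRegularOfDeg G₂ r₂) (p : V₁ × V₂) :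
    (((splitNbhdCorona G₁ G₂).neighborSet (.inr p)).ncard : ℝ) = r₁ + r₂ := by
  rw [ncard_neighborSet_eq_sum]
  simp only [Fintype.sum_sum_type, corona_adj_co, corona_adj_cs, corona_adj_cc,
    Fintype.sum_prod_type, sum_adj_of_regular h₁, ite_and]
  have : ∀ a : V₁, (∑ b, if p.1 = a then (if G₂.Adj p.2 b then (1 : ℝ) else 0) else 0) =
      if p.1 = a then (r₂ : ℝ) else 0 := by
    intro a
    split_ifs
    · exact sum_adj_of_regular h₂ p.2
    · simp
  simp [this]

variable (G₁ G₂) in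
/-- The block form of `lam I - A_α(G₁ ⋇ G₂)`, the original vertices being separated from the
added vertices together with the copies of `G₂`. -/
lemma corona_block_form (h₁ : IsRegularOfDeg G₁ r₁) (h₂ : IsRegularOfDeg G₂ r₂) (α lam : ℝ) :
    (lam • (1 : Matrix ((V₁ ⊕ V₁) ⊕ V₁ × V₂) ((V₁ ⊕ V₁) ⊕ V₁ × V₂) ℝ) -
        AMat (splitNbhdCorona G₁ G₂) α).submatrix
        (Equiv.sumAssoc V₁ V₁ (V₁ × V₂)).symm (Equiv.sumAssoc V₁ V₁ (V₁ × V₂)).symm =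
      fromBlocks
        ((lam - (2 + (Fintype.card V₂ : ℝ)) * r₁ * α) • 1 - (1 - α) • adjMat G₁)
        (fromCols (-(1 - α) • adjMat G₁) (of fun v p => -(1 - α) * adjMat G₁ v p.1))
        (fromRows (-(1 - α) • adjMat G₁) (of fun p v => -(1 - α) * adjMat G₁ p.1 v))
        (fromBlocks ((lam - α * r₁) • 1) 0 0
          (kronecker (1 : Matrix V₁ V₁ ℝ) ((lam - α * r₁) • 1 - AMat G₂ α))) := by
  ext i j
  rcases i with v | v | p <;> rcases j with w | w | q
  · by_cases h : v = w
    · subst h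
      simp [AMat, degMat, adjMat, corona_degree_o h₁]
      ring
    · simp [AMat, degMat, adjMat, corona_adj_oo, h]
  · simp [AMat, degMat, adjMat, corona_adj_os, -neg_sub]
  · simp [AMat, degMat, adjMat, corona_adj_oc, -neg_sub]
    split_ifs <;> simp
  · simp [AMat, degMat, adjMat, corona_adj_so, -neg_sub]
  · by_cases h : v = w
    · subst h
      simp [AMat, degMat, adjMat, corona_degree_s h₁]
    · simp [AMat, degMat, adjMat, corona_adj_ss, h]
  · simp [AMat, degMat, adjMat, corona_adj_sc]
  · simp [AMat, degMat, adjMat, corona_adj_co, -neg_sub]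
    split_ifs <;> simp
  · simp [AMat, degMat, adjMat, corona_adj_cs]
  · obtain ⟨a, b⟩ := p
    obtain ⟨c, d⟩ := q
    have hd : ((G₂.neighborSet b).ncard : ℝ) = r₂ := by rw [h₂ b]
    by_cases h : a = c
    · subst h
      by_cases h' : b = d
      · subst h'
        simp [AMat, degMat, adjMat, corona_degree_c h₁ h₂, hd]
        ring
      · simp [AMat, degMat, adjMat, corona_adj_cc, h', one_apply]
    · simp [AMat, degMat, adjMat, corona_adj_cc, h, one_apply]

/-- A regular `G₂` gives `x I - A_α(G₂)` constant row sums `x - r₂`. -/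
lemma sum_row_AMat (h₂ : IsRegularOfDeg G₂ r₂) (α x : ℝ) (b : V₂) :
    ∑ d, (x • (1 : Matrix V₂ V₂ ℝ) - AMat G₂ α) b d = x - r₂ := by
  have hd : ((G₂.neighborSet b).ncard : ℝ) = r₂ := by rw [h₂ b]
  simp only [AMat, degMat, adjMat, Matrix.sub_apply, Matrix.add_apply, Matrix.smul_apply,
    of_apply, one_apply, diagonal_apply, smul_eq_mul, Finset.sum_sub_distrib,
    Finset.sum_add_distrib, ← Finset.mul_sum, sum_adj_of_regular h₂, Finset.sum_ite_eq,
    Finset.mem_univ, if_true, hd]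
  ring

/-- The determinant identity obtained by eliminating the added vertices and the copies of `G₂`.
The factor `x ^ card V₁`, with `x = lam - α r₁`, appears on both sides. -/
lemma corona_elimination (h₁ : IsRegularOfDeg G₁ r₁) (h₂ : IsRegularOfDeg G₂ r₂)
    (α lam x : ℝ) (hx : x = lam - α * r₁) :
    charPolyAt (AMat (splitNbhdCorona G₁ G₂) α) lam * (x * (x - r₂)) ^ Fintype.card V₁ =
      ((x * (x - r₂) * (lam - (2 + (Fintype.card V₂ : ℝ)) * r₁ * α)) • (1 : Matrix V₁ V₁ ℝ) +
        (-(x * (x - r₂) * (1 - α))) • adjMat G₁ +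
        (-((1 - α) ^ 2 * ((x - r₂) + x * Fintype.card V₂))) • (adjMat G₁ * adjMat G₁)).det *
      (x ^ Fintype.card V₁ * charPolyAt (AMat G₂ α) x ^ Fintype.card V₁) := by
  rw [charPolyAt_eq_det, charPolyAt_eq_det,
    ← det_submatrix_equiv_self (Equiv.sumAssoc V₁ V₁ (V₁ × V₂)).symm,
    corona_block_form G₁ G₂ h₁ h₂, ← hx]
  -- With `D = diag(x I, I ⊗ (x I - A_α(G₂)))` and `(x I - A_α(G₂)) 1 = (x - r₂) 1`, this `Z`
  -- satisfies `s C + D Z = 0` for `s = x (x - r₂)`.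
  rw [det_fromBlocks_mul_pow _ _ _ _ (x * (x - r₂))
    (fromRows (((1 - α) * (x - r₂)) • adjMat G₁)
      (of fun p v => (1 - α) * x * adjMat G₁ p.1 v))]
  · have hE : (of fun v (p : V₁ × V₂) => -(1 - α) * adjMat G₁ v p.1) *
        (of fun (p : V₁ × V₂) v => (1 - α) * x * adjMat G₁ p.1 v) =
        (-((1 - α) ^ 2 * x * Fintype.card V₂)) • (adjMat G₁ * adjMat G₁) := by
      ext v w
      simp only [mul_apply, of_apply, Matrix.smul_apply, Fintype.sum_prod_type,
        Finset.sum_const, Finset.card_univ, nsmul_eq_mul, smul_eq_mul, Finset.mul_sum]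
      exact Finset.sum_congr rfl fun _ _ => by ring
    congr 1
    · congr 1
      rw [fromCols_mul_fromRows, hE, smul_mul_smul_comm]
      module
    · rw [det_fromBlocks_zero₁₂, kronecker, det_kronecker]
      simp
  · rw [fromBlocks_mul_fromRows]
    ext p w
    rcases p with v | ⟨a, b⟩
    · simp
      ring
    · have := sum_row_AMat h₂ α x b
      simp only [Matrix.add_apply, Matrix.smul_apply, fromRows_apply_inr, of_apply, mul_apply,
        kronecker, kroneckerMap_apply, Fintype.sum_prod_type, smul_eq_mul, zero_mul,
        Matrix.zero_apply, Finset.sum_const_zero, zero_add]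
      have h3 : ∀ c : V₁, (∑ d, (1 : Matrix V₁ V₁ ℝ) a c *
          (x • (1 : Matrix V₂ V₂ ℝ) - AMat G₂ α) b d * ((1 - α) * x * adjMat G₁ c w)) =
          if a = c then (x - r₂) * ((1 - α) * x * adjMat G₁ c w) else 0 := by
        intro c
        rw [← Finset.sum_mul, ← Finset.mul_sum, this, one_apply]
        split_ifs <;> ring
      simp only [h3, Finset.sum_ite_eq, Finset.mem_univ, if_true]
      simp
      ring

end Corona

theorem charPolyAt_splitNbhdCorona_regular
    {V₁ V₂ : Type*} [Fintype V₁] [Fintype V₂]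
    (G₁ : SimpleGraph V₁) (G₂ : SimpleGraph V₂)
    (n₁ n₂ r₁ r₂ : ℕ)
    (hn₁ : Fintype.card V₁ = n₁) (hn₂ : Fintype.card V₂ = n₂)
    (hreg₁ : IsRegularOfDeg G₁ r₁) (hreg₂ : IsRegularOfDeg G₂ r₂)
    (α : ℝ) (hα : α ∈ Set.Icc (0 : ℝ) 1)
    (f : Fin n₁ → ℝ) (hfa : Antitone f)
    (hf : ∀ x : ℝ, charPolyAt (adjMat G₁) x = ∏ i, (x - f i))
    (g : Fin n₂ → ℝ) (hga : Antitone g)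
    (hg : ∀ x : ℝ, charPolyAt (AMat G₂ α) x = ∏ i, (x - g i)) :
    ∀ lam : ℝ,
      (lam - α * (r₁ : ℝ) - (r₂ : ℝ)) ^ n₁ *
          charPolyAt (AMat (splitNbhdCorona G₁ G₂) α) lam =
        (∏ i, (lam - α * (r₁ : ℝ) - g i) ^ n₁) *
          ∏ i,
            ((lam - α * (r₁ : ℝ)) *
                ((lam - α * (r₁ : ℝ) - (r₂ : ℝ)) *
                    (lam - (2 + (n₂ : ℝ)) * (r₁ : ℝ) * α - (1 - α) * f i) -
                  (1 - α) ^ 2 * (n₂ : ℝ) * (f i) ^ 2) -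
              (1 - α) ^ 2 * (lam - α * (r₁ : ℝ) - (r₂ : ℝ)) * (f i) ^ 2) := by
  intro lam
  subst hn₁ hn₂
  have hcont : Continuous fun lam => charPolyAt (AMat (splitNbhdCorona G₁ G₂) α) lam := by
    simp only [charPolyAt_eq_det]
    fun_prop
  -- Both sides are continuous in `lam`, so the value `lam = α r₁` may be excluded.
  revert lam
  refine funext_iff.mp (Continuous.ext_on (dense_compl_singleton (α * (r₁ : ℝ)))
    (by fun_prop) (by fun_prop) fun lam hlam => ?_)
  have hx : lam - α * r₁ ≠ 0 := sub_ne_zero.mpr hlam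
  have key := corona_elimination hreg₁ hreg₂ α lam _ rfl
  rw [det_quadratic_eq_prod (adjMat_isHermitian G₁) f
    (fun x => by rw [← charPolyAt_eq_det, hf]), hg] at key
  refine mul_left_cancel₀ (pow_ne_zero (Fintype.card V₁) hx) ?_
  rw [mul_pow] at key
  rw [Finset.prod_pow]
  refine Eq.trans (by ring) (key.trans ?_)
  rw [mul_comm, mul_assoc]
  congr 2
  refine Finset.prod_congr rfl fun i _ => ?_
  ring


end AalphaSpectra
end
end
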